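/- Let d ≥ 1 and let b : ℕ₊^d → ℝ be a family of coefficients such that for some d-tuple θ = (θ₁,…,θ_d) of non-negative integers, ∑_{β∈ℕ₊^d} b_β² · β₁^{−θ₁}⋯β_d^{−θ_d} < ∞. Then for every Schwartz function φ on ℝ^d the series ∑_{β∈ℕ₊^d} b_β ∫_{ℝ^d} φ(x) η_β(x) dx converges absolutely, and the map T(φ) := ∑_{β∈ℕ₊^d} b_β ∫_{ℝ^d} φ(x) η_β(x) dx defines a continuous linear functional on the Schwartz space S(ℝ^d), i.e. a tempered distribution T = ∑_β b_β η_β. -/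

import Mathlib

/-!
The proof transfers polynomial decay from the Hermite coefficients of `φ` to an `L²` statement.

Let `H_i = x_i² - ∂_i²`, a continuous operator on the Schwartz space. The Hermite equation
`ζ_n'' = (x² - (2n - 1)) ζ_n` and two integrations by parts give
`∫ (H_i φ) η_β = (2 β_i - 1) ∫ φ η_β` (`integral_hermiteOp_mul_hermiteTensor`). Composing powers of
the `H_i` yields one continuous operator `P` on the Schwartz space with
`∫ (P φ) η_β = l_β ∫ φ η_β`, where `l_β = ∏ (2 β_i - 1)^(θ_i + 2)` (`exists_hermiteOp_prod`).

All the `η_β` have the same `L²` norm: the ladder relations make `‖ζ_n‖` independent of `n`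
(`integral_hermitePoly_sq`), and Fubini gives the tensor products. The hypothesis on `b` implies
`|b_β| ≤ K ∏ β_i^θ_i`, so `|b_β / l_β| ≤ K ∏ β_i⁻²` and `g = ∑ (b_β / l_β) η_β` converges absolutely
in `L²`. Hence `b_β ∫ φ η_β = ⟪(b_β / l_β) η_β, P φ⟫` is absolutely summable, and
`T φ = ⟪g, P φ⟫` is a composition of continuous linear maps.

Derivatives are handled through functions `p(x) e^{-x²/2}` with `p` a polynomial, where
differentiation becomes the algebraic operation `p ↦ p' - X p`.
-/

open scoped BigOperators
open MeasureTheory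

/-- The `n`-th Hermite function `ζ_n` (indexed by `n ∈ ℕ₊`):
`ζ_n(x) = π^{-1/4} ((n-1)!)^{-1/2} e^{-x²/2} h_{n-1}(√2 x)`,
where `h_k` is the `k`-th (probabilists') Hermite polynomial. -/
noncomputable def hermiteFun (n : ℕ+) (x : ℝ) : ℝ :=
  Real.pi ^ (-(1 / 4 : ℝ)) * ((Nat.factorial ((n : ℕ) - 1) : ℝ)) ^ (-(1 / 2 : ℝ)) *
    Real.exp (-x ^ 2 / 2) *
      Polynomial.aeval (Real.sqrt 2 * x) (Polynomial.hermite ((n : ℕ) - 1))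

/-- The tensor-product Hermite function `η_β` on `ℝ^d`, for `β ∈ ℕ₊^d`. -/
noncomputable def hermiteTensor {d : ℕ} (β : Fin d → ℕ+)
    (x : EuclideanSpace ℝ (Fin d)) : ℝ :=
  ∏ i, hermiteFun (β i) (x i)

open Polynomial

/-! ### Polynomials times a Gaussian -/

/-- The function `p(x) e^{-x²/2}` of a real polynomial `p`. -/
noncomputable def polyGauss (p : ℝ[X]) (x : ℝ) : ℝ := p.eval x * Real.exp (-x ^ 2 / 2)

/-- The operation on polynomials induced by differentiating `p(x) e^{-x²/2}`. -/
noncomputable def gaussD (p : ℝ[X]) : ℝ[X] := derivative p - X * p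

lemma polyGauss_hasDerivAt (p : ℝ[X]) (x : ℝ) :
    HasDerivAt (polyGauss p) (polyGauss (gaussD p) x) x := by
  have h1 : HasDerivAt (fun y : ℝ => -y ^ 2 / 2) (-x) x := by
    refine (((hasDerivAt_pow 2 x).neg).div_const 2).congr_deriv ?_
    norm_num
    ring
  refine ((p.hasDerivAt x).mul h1.exp).congr_deriv ?_
  simp [polyGauss, gaussD]
  ring

lemma polyGauss_continuous (p : ℝ[X]) : Continuous (polyGauss p) := by
  unfold polyGauss
  fun_prop

lemma polyGauss_bounded (p : ℝ[X]) : ∃ C, ∀ x, |polyGauss p x| ≤ C := by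
  induction p using Polynomial.induction_on' with
  | add p q hp hq =>
    obtain ⟨A, hA⟩ := hp
    obtain ⟨B, hB⟩ := hq
    refine ⟨A + B, fun x => ?_⟩
    have : polyGauss (p + q) x = polyGauss p x + polyGauss q x := by
      simp [polyGauss, add_mul]
    rw [this]
    exact (abs_add_le _ _).trans (add_le_add (hA x) (hB x))
  | monomial n a =>
    refine ⟨|a| * (n.factorial * Real.exp (1 / 2)), fun x => ?_⟩
    have h1 : |x| ^ n ≤ n.factorial * Real.exp |x| := by
      have := Real.pow_div_factorial_le_exp |x| (abs_nonneg x) n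
      rwa [div_le_iff₀' (by positivity)] at this
    have h2 : Real.exp |x| * Real.exp (-x ^ 2 / 2) ≤ Real.exp (1 / 2) := by
      rw [← Real.exp_add]
      apply Real.exp_le_exp.2
      nlinarith [sq_nonneg (|x| - 1), sq_abs x]
    simp only [polyGauss, eval_monomial, abs_mul, abs_pow, Real.abs_exp, mul_assoc]
    refine mul_le_mul_of_nonneg_left ?_ (abs_nonneg a)
    calc |x| ^ n * Real.exp (-x ^ 2 / 2)
        ≤ n.factorial * Real.exp |x| * Real.exp (-x ^ 2 / 2) := by gcongr
      _ = n.factorial * (Real.exp |x| * Real.exp (-x ^ 2 / 2)) := by ring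
      _ ≤ _ := by gcongr

/-- Boundedness of `(1 + x²) p(x) e^{-x²/2}` gives an integrable majorant `C / (1 + x²)`. -/
lemma polyGauss_integrable (p : ℝ[X]) : Integrable (polyGauss p) := by
  obtain ⟨C, hC⟩ := polyGauss_bounded ((1 + X ^ 2) * p)
  refine (integrable_inv_one_add_sq.const_mul C).mono'
    (polyGauss_continuous p).aestronglyMeasurable (Filter.Eventually.of_forall fun x => ?_)
  have h := hC x
  have e : polyGauss ((1 + X ^ 2) * p) x = (1 + x ^ 2) * polyGauss p x := by
    simp [polyGauss, mul_assoc]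
  have hx : 0 < 1 + x ^ 2 := by positivity
  rw [e, abs_mul, abs_of_pos hx] at h
  rw [Real.norm_eq_abs, ← div_eq_mul_inv, le_div_iff₀' hx]
  exact h

lemma polyGauss_mul_integrable (p q : ℝ[X]) :
    Integrable (fun x => polyGauss p x * polyGauss q x) := by
  obtain ⟨C, hC⟩ := polyGauss_bounded p
  exact (polyGauss_integrable q).bdd_mul (c := C) (polyGauss_continuous p).aestronglyMeasurable
    (Filter.Eventually.of_forall hC)

/-! ### One-dimensional Hermite functions -/

lemma derivative_hermite_succ (k : ℕ) :
    derivative (hermite (k + 1)) = ((k : ℤ[X]) + 1) * hermite k := by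
  induction k with
  | zero => simp
  | succ k ih =>
    rw [hermite_succ (k + 1)]
    simp only [derivative_sub, derivative_mul, derivative_X, ih]
    simp only [derivative_add, derivative_natCast, derivative_one]
    rw [hermite_succ k]
    push_cast
    ring

/-- The polynomial `h_k(√2 x)`, with real coefficients. -/
noncomputable def scaledHermite (k : ℕ) : ℝ[X] :=
  ((hermite k).map (Int.castRingHom ℝ)).comp (C (Real.sqrt 2) * X)

lemma C_sqrt_two_sq : (C (Real.sqrt 2) : ℝ[X]) ^ 2 = 2 := by
  rw [← C_pow, Real.sq_sqrt (by norm_num)]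
  rfl

lemma derivative_scaledHermite (k : ℕ) :
    derivative (scaledHermite k) = C (Real.sqrt 2) *
      ((derivative (hermite k)).map (Int.castRingHom ℝ)).comp (C (Real.sqrt 2) * X) := by
  simp [scaledHermite, derivative_comp, derivative_map]

lemma derivative_scaledHermite_succ (k : ℕ) :
    derivative (scaledHermite (k + 1)) =
      C (Real.sqrt 2) * ((k : ℝ[X]) + 1) * scaledHermite k := by
  rw [derivative_scaledHermite, derivative_hermite_succ]
  simp [scaledHermite, mul_assoc]

lemma sqrt_two_mul_scaledHermite_succ (k : ℕ) :
    C (Real.sqrt 2) * scaledHermite (k + 1) =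
      2 * X * scaledHermite k - derivative (scaledHermite k) := by
  rw [derivative_scaledHermite]
  simp only [scaledHermite, hermite_succ, Polynomial.map_sub, Polynomial.map_mul, map_X, sub_comp,
    mul_comp, X_comp]
  linear_combination X * ((hermite k).map (Int.castRingHom ℝ)).comp (C (Real.sqrt 2) * X) *
    C_sqrt_two_sq

/-- The Hermite equation, obtained by differentiating the raising relation and simplifying with
the lowering relation. -/
lemma gaussD_gaussD_scaledHermite (k : ℕ) :
    gaussD (gaussD (scaledHermite k)) = (X ^ 2 - (2 * (k : ℝ[X]) + 1)) * scaledHermite k := by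
  have h := congrArg derivative (sqrt_two_mul_scaledHermite_succ k)
  have h2 := derivative_scaledHermite_succ k
  simp only [derivative_mul, derivative_C, derivative_sub, derivative_X, h2,
    derivative_ofNat] at h
  simp only [gaussD, derivative_mul, derivative_sub, derivative_X]
  linear_combination h - ((k : ℝ[X]) + 1) * scaledHermite k * C_sqrt_two_sq

lemma polyGauss_integral_by_parts (p q : ℝ[X]) :
    ∫ x, polyGauss p x * polyGauss (gaussD q) x =
      -∫ x, polyGauss (gaussD p) x * polyGauss q x :=
  integral_mul_deriv_eq_deriv_mul_of_integrable (fun x _ => polyGauss_hasDerivAt p x)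
    (fun x _ => polyGauss_hasDerivAt q x) (polyGauss_mul_integrable _ _)
    (polyGauss_mul_integrable _ _) (polyGauss_mul_integrable _ _)

/-- Integration by parts moves the raising operator `(x - d/dx)/√2` off one factor of the square,
where it becomes the lowering operator `(x + d/dx)/√2`. -/
lemma integral_scaledHermite_sq_succ (k : ℕ) :
    ∫ x, polyGauss (scaledHermite (k + 1)) x ^ 2 =
      (k + 1) * ∫ x, polyGauss (scaledHermite k) x ^ 2 := by
  have s2 : Real.sqrt 2 ^ 2 = 2 := Real.sq_sqrt (by norm_num)
  have hp := polyGauss_integral_by_parts (scaledHermite (k + 1)) (scaledHermite k)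
  have e1 : ∀ x, polyGauss (scaledHermite (k + 1)) x * polyGauss (gaussD (scaledHermite k)) x =
      x * polyGauss (scaledHermite (k + 1)) x * polyGauss (scaledHermite k) x
        - Real.sqrt 2 * polyGauss (scaledHermite (k + 1)) x ^ 2 := by
    intro x
    have h := congrArg (eval x) (sqrt_two_mul_scaledHermite_succ k)
    simp at h
    simp only [polyGauss, gaussD, eval_sub, eval_mul, eval_X]
    linear_combination (eval x (scaledHermite (k + 1)) * Real.exp (-x ^ 2 / 2) ^ 2) * h
  have e2 : ∀ x, polyGauss (gaussD (scaledHermite (k + 1))) x * polyGauss (scaledHermite k) x =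
      Real.sqrt 2 * (k + 1) * polyGauss (scaledHermite k) x ^ 2
        - x * polyGauss (scaledHermite (k + 1)) x * polyGauss (scaledHermite k) x := by
    intro x
    have h := congrArg (eval x) (derivative_scaledHermite_succ k)
    simp at h
    simp only [polyGauss, gaussD, eval_sub, eval_mul, eval_X]
    linear_combination (eval x (scaledHermite k) * Real.exp (-x ^ 2 / 2) ^ 2) * h
  have i1 : Integrable fun x : ℝ =>
      x * polyGauss (scaledHermite (k + 1)) x * polyGauss (scaledHermite k) x := by
    refine (polyGauss_mul_integrable (X * scaledHermite (k + 1)) (scaledHermite k)).congr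
      (Filter.Eventually.of_forall fun x => ?_)
    simp [polyGauss, mul_assoc]
  have i2 : ∀ j, Integrable fun x : ℝ => polyGauss (scaledHermite j) x ^ 2 := by
    intro j
    simpa only [sq] using polyGauss_mul_integrable (scaledHermite j) (scaledHermite j)
  simp only [e1, e2] at hp
  rw [integral_sub i1 ((i2 _).const_mul _), integral_sub ((i2 _).const_mul _) i1,
    integral_const_mul, integral_const_mul] at hp
  have hs : Real.sqrt 2 ≠ 0 := by positivity
  apply mul_left_cancel₀ hs
  linear_combination -hp

lemma integral_scaledHermite_sq (k : ℕ) :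
    ∫ x, polyGauss (scaledHermite k) x ^ 2 =
      k.factorial * ∫ x, polyGauss (scaledHermite 0) x ^ 2 := by
  induction k with
  | zero => simp
  | succ k ih =>
    rw [integral_scaledHermite_sq_succ, ih, Nat.factorial_succ]
    push_cast
    ring

/-- The polynomial factor of the normalized Hermite function `ζ_n`, so that
`ζ_n(x) = hermitePoly n (x) * e^{-x²/2}`. -/
noncomputable def hermitePoly (n : ℕ+) : ℝ[X] :=
  C (Real.pi ^ (-(1 / 4 : ℝ)) * ((Nat.factorial ((n : ℕ) - 1) : ℝ)) ^ (-(1 / 2 : ℝ))) *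
    scaledHermite ((n : ℕ) - 1)

lemma hermiteFun_eq (n : ℕ+) : hermiteFun n = polyGauss (hermitePoly n) := by
  funext x
  simp only [hermiteFun, polyGauss, hermitePoly, scaledHermite, eval_mul, eval_C, eval_comp,
    eval_X, aeval_def, eval_map, algebraMap_int_eq]
  ring

/-- The eigenvalue equation `ζ_n'' = (x² - (2n - 1)) ζ_n`, in terms of polynomial factors. -/
lemma gaussD_gaussD_hermitePoly (n : ℕ+) :
    gaussD (gaussD (hermitePoly n)) = (X ^ 2 - C (2 * ((n : ℕ) : ℝ) - 1)) * hermitePoly n := by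
  have h := gaussD_gaussD_scaledHermite ((n : ℕ) - 1)
  have hn : (((n : ℕ) - 1 : ℕ) : ℝ[X]) = C ((n : ℕ) : ℝ) - 1 := by
    rw [Nat.cast_sub n.pos]
    simp
  rw [hn] at h
  have h2 : (C (2 * ((n : ℕ) : ℝ) - 1) : ℝ[X]) = 2 * C ((n : ℕ) : ℝ) - 1 := by
    simp only [C_sub, C_mul, C_1]
    rfl
  rw [h2]
  simp only [gaussD, hermitePoly, derivative_mul, derivative_sub, derivative_X, derivative_C,
    zero_mul, zero_add] at h ⊢
  linear_combination (C (Real.pi ^ (-(1 / 4 : ℝ)) *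
    ((Nat.factorial ((n : ℕ) - 1) : ℝ)) ^ (-(1 / 2 : ℝ)))) * h

/-- The `L²` norm of `ζ_n` does not depend on `n`; its value plays no role in the argument. -/
lemma integral_hermitePoly_sq (n : ℕ+) :
    ∫ x, polyGauss (hermitePoly n) x ^ 2 = ∫ x, polyGauss (hermitePoly 1) x ^ 2 := by
  have key : ∀ m : ℕ+, ∫ x, polyGauss (hermitePoly m) x ^ 2 =
      (Real.pi ^ (-(1 / 4 : ℝ))) ^ 2 * ∫ x, polyGauss (scaledHermite 0) x ^ 2 := by
    intro m
    have e : ∀ x, polyGauss (hermitePoly m) x ^ 2 = (Real.pi ^ (-(1 / 4 : ℝ)) *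
        ((Nat.factorial ((m : ℕ) - 1) : ℝ)) ^ (-(1 / 2 : ℝ))) ^ 2 *
        polyGauss (scaledHermite ((m : ℕ) - 1)) x ^ 2 := by
      intro x
      simp only [polyGauss, hermitePoly, eval_mul, eval_C]
      ring
    simp only [e]
    rw [integral_const_mul, integral_scaledHermite_sq]
    have hf : (0 : ℝ) < (Nat.factorial ((m : ℕ) - 1) : ℝ) := by positivity
    have hr : (((Nat.factorial ((m : ℕ) - 1) : ℝ)) ^ (-(1 / 2 : ℝ))) ^ 2 *
        (Nat.factorial ((m : ℕ) - 1) : ℝ) = 1 := by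
      rw [← Real.rpow_natCast, ← Real.rpow_mul hf.le]
      norm_num
      rw [Real.rpow_neg_one, inv_mul_cancel₀ hf.ne']
    linear_combination ((Real.pi ^ (-(1 / 4 : ℝ))) ^ 2 *
      ∫ x, polyGauss (scaledHermite 0) x ^ 2) * hr
  rw [key, key]

/-! ### Tensor products and the Hermite operators -/

/-- The tensor product of the functions `p_i(x_i) e^{-x_i²/2}`. -/
noncomputable def tensorGauss {d : ℕ} (p : Fin d → ℝ[X]) (x : EuclideanSpace ℝ (Fin d)) : ℝ :=
  ∏ i, polyGauss (p i) (x i)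

lemma hermiteTensor_eq {d : ℕ} (β : Fin d → ℕ+) :
    hermiteTensor β = tensorGauss fun i => hermitePoly (β i) := by
  funext x
  simp [hermiteTensor, tensorGauss, hermiteFun_eq]

lemma tensorGauss_continuous {d : ℕ} (p : Fin d → ℝ[X]) : Continuous (tensorGauss p) :=
  continuous_finsetProd _ fun i _ => (polyGauss_continuous (p i)).comp (by fun_prop)

lemma tensorGauss_bounded {d : ℕ} (p : Fin d → ℝ[X]) : ∃ C, ∀ x, ‖tensorGauss p x‖ ≤ C := by
  choose C hC using fun i => polyGauss_bounded (p i)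
  refine ⟨∏ i, C i, fun x => ?_⟩
  rw [tensorGauss, norm_prod]
  exact Finset.prod_le_prod (fun _ _ => norm_nonneg _) fun i _ => hC i _

lemma schwartz_mul_tensorGauss_integrable {d : ℕ}
    (φ : SchwartzMap (EuclideanSpace ℝ (Fin d)) ℝ) (p : Fin d → ℝ[X]) :
    Integrable fun x => φ x * tensorGauss p x := by
  obtain ⟨C, hC⟩ := tensorGauss_bounded p
  exact φ.integrable.mul_bdd (c := C) (tensorGauss_continuous p).aestronglyMeasurable
    (Filter.Eventually.of_forall hC)

lemma tensorGauss_update {d : ℕ} (p : Fin d → ℝ[X]) (i : Fin d) (q : ℝ[X])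
    (x : EuclideanSpace ℝ (Fin d)) :
    tensorGauss (Function.update p i q) x =
      polyGauss q (x i) * ∏ j ∈ Finset.univ.erase i, polyGauss (p j) (x j) := by
  rw [tensorGauss, ← Finset.mul_prod_erase _ _ (Finset.mem_univ i), Function.update_self]
  congr 1
  refine Finset.prod_congr rfl fun j hj => ?_
  rw [Function.update_of_ne (Finset.ne_of_mem_erase hj)]

/-- The partial derivative in the `i`-th coordinate only changes the `i`-th polynomial. -/
lemma tensorGauss_hasLineDerivAt {d : ℕ} (p : Fin d → ℝ[X]) (i : Fin d)
    (x : EuclideanSpace ℝ (Fin d)) :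
    HasLineDerivAt ℝ (tensorGauss p) (tensorGauss (Function.update p i (gaussD (p i))) x) x
      (EuclideanSpace.single i 1) := by
  rw [tensorGauss_update]
  have h0 : ∀ t : ℝ, tensorGauss p (x + t • EuclideanSpace.single i 1) =
      polyGauss (p i) (x i + t) * ∏ j ∈ Finset.univ.erase i, polyGauss (p j) (x j) := by
    intro t
    rw [tensorGauss, ← Finset.mul_prod_erase _ _ (Finset.mem_univ i)]
    congr 1
    · simp
    · refine Finset.prod_congr rfl fun j hj => ?_
      have hne := Finset.ne_of_mem_erase hj
      simp [hne]
  unfold HasLineDerivAt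
  simp only [h0]
  refine HasDerivAt.mul_const ?_ _
  have := polyGauss_hasDerivAt (p i) (x i + 0)
  simpa using this.comp_const_add (x i) 0

open LineDeriv in
lemma integral_lineDeriv_mul_tensorGauss {d : ℕ}
    (φ : SchwartzMap (EuclideanSpace ℝ (Fin d)) ℝ) (p : Fin d → ℝ[X]) (i : Fin d) :
    ∫ x, (∂_{EuclideanSpace.single i (1 : ℝ)} φ) x * tensorGauss p x =
      -∫ x, φ x * tensorGauss (Function.update p i (gaussD (p i))) x := by
  set ψ : SchwartzMap (EuclideanSpace ℝ (Fin d)) ℝ :=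
    ∂_{EuclideanSpace.single i (1 : ℝ)} φ with hψ
  have h := integral_bilinear_hasLineDerivAt_right_eq_neg_left_of_integrable
    (μ := (volume : Measure (EuclideanSpace ℝ (Fin d))))
    (f := φ) (f' := ψ) (g := tensorGauss p)
    (g' := tensorGauss (Function.update p i (gaussD (p i))))
    (v := EuclideanSpace.single i (1 : ℝ)) (B := ContinuousLinearMap.mul ℝ ℝ)
    (schwartz_mul_tensorGauss_integrable ψ _) (schwartz_mul_tensorGauss_integrable φ _)
    (schwartz_mul_tensorGauss_integrable φ _)
    (fun x _ => by
      rw [hψ, SchwartzMap.lineDerivOp_apply_eq_fderiv]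
      exact φ.differentiableAt.hasFDerivAt.hasLineDerivAt _)
    (fun x _ => tensorGauss_hasLineDerivAt p i x)
  simp only [ContinuousLinearMap.mul_apply'] at h
  rw [h, neg_neg]

open LineDeriv in
/-- The one-coordinate Hermite operator `φ ↦ x_i² φ - ∂_i² φ` on the Schwartz space. -/
noncomputable def hermiteOp {d : ℕ} (i : Fin d) :
    SchwartzMap (EuclideanSpace ℝ (Fin d)) ℝ →L[ℝ] SchwartzMap (EuclideanSpace ℝ (Fin d)) ℝ :=
  SchwartzMap.smulLeftCLM ℝ (fun x : EuclideanSpace ℝ (Fin d) => x i ^ 2) -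
    lineDerivOpCLM ℝ _ (EuclideanSpace.single i (1 : ℝ)) ∘L
      lineDerivOpCLM ℝ _ (EuclideanSpace.single i (1 : ℝ))

lemma coord_sq_hasTemperateGrowth {d : ℕ} (i : Fin d) :
    (fun x : EuclideanSpace ℝ (Fin d) => x i ^ 2).HasTemperateGrowth := by
  have h : (fun x : EuclideanSpace ℝ (Fin d) => x i).HasTemperateGrowth :=
    (EuclideanSpace.proj (𝕜 := ℝ) i : EuclideanSpace ℝ (Fin d) →L[ℝ] ℝ).hasTemperateGrowth
  have h2 := h.mul h
  rw [← sq] at h2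
  exact h2

open LineDeriv in
lemma integral_hermiteOp_mul_hermiteTensor {d : ℕ} (i : Fin d)
    (φ : SchwartzMap (EuclideanSpace ℝ (Fin d)) ℝ) (β : Fin d → ℕ+) :
    ∫ x, hermiteOp i φ x * hermiteTensor β x =
      (2 * ((β i : ℕ) : ℝ) - 1) * ∫ x, φ x * hermiteTensor β x := by
  rw [hermiteTensor_eq]
  set p : Fin d → ℝ[X] := fun i => hermitePoly (β i) with hp
  set e : EuclideanSpace ℝ (Fin d) := EuclideanSpace.single i (1 : ℝ)
  set Q := SchwartzMap.smulLeftCLM ℝ (fun x : EuclideanSpace ℝ (Fin d) => x i ^ 2) φ with hQ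
  have h1 : ∫ x, (∂_{e} (∂_{e} φ)) x * tensorGauss p x =
      ∫ x, φ x * tensorGauss (Function.update p i (gaussD (gaussD (p i)))) x := by
    rw [integral_lineDeriv_mul_tensorGauss, integral_lineDeriv_mul_tensorGauss, neg_neg]
    simp
  have h2 : ∀ x, φ x * tensorGauss (Function.update p i (gaussD (gaussD (p i)))) x =
      Q x * tensorGauss p x - (2 * ((β i : ℕ) : ℝ) - 1) * (φ x * tensorGauss p x) := by
    intro x
    rw [hQ, SchwartzMap.smulLeftCLM_apply_apply (coord_sq_hasTemperateGrowth i),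
      tensorGauss_update, hp, gaussD_gaussD_hermitePoly, tensorGauss,
      ← Finset.mul_prod_erase _ _ (Finset.mem_univ i)]
    simp only [polyGauss, eval_mul, eval_sub, eval_pow, eval_X, eval_C, smul_eq_mul]
    ring
  have h3 : ∀ x, hermiteOp i φ x * tensorGauss p x =
      Q x * tensorGauss p x - (∂_{e} (∂_{e} φ)) x * tensorGauss p x := by
    intro x
    simp only [hermiteOp, sub_apply, ContinuousLinearMap.comp_apply,
      lineDerivOpCLM_apply]
    ring
  simp only [h3]
  rw [integral_sub (schwartz_mul_tensorGauss_integrable _ _)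
    (schwartz_mul_tensorGauss_integrable _ _), h1]
  simp only [h2]
  rw [integral_sub (schwartz_mul_tensorGauss_integrable _ _)
    ((schwartz_mul_tensorGauss_integrable _ _).const_mul _), integral_const_mul]
  ring

/-- The operator `P` is a composition of the powers `H_i ^ N_i`, in an unspecified order. -/
lemma exists_hermiteOp_prod {d : ℕ} (N : Fin d → ℕ) :
    ∃ P : SchwartzMap (EuclideanSpace ℝ (Fin d)) ℝ →L[ℝ]
        SchwartzMap (EuclideanSpace ℝ (Fin d)) ℝ,
      ∀ φ (β : Fin d → ℕ+), ∫ x, P φ x * hermiteTensor β x =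
        (∏ i, (2 * ((β i : ℕ) : ℝ) - 1) ^ N i) * ∫ x, φ x * hermiteTensor β x := by
  have pow : ∀ (i : Fin d) (n : ℕ), ∃ P : SchwartzMap (EuclideanSpace ℝ (Fin d)) ℝ →L[ℝ]
        SchwartzMap (EuclideanSpace ℝ (Fin d)) ℝ,
      ∀ φ (β : Fin d → ℕ+), ∫ x, P φ x * hermiteTensor β x =
        (2 * ((β i : ℕ) : ℝ) - 1) ^ n * ∫ x, φ x * hermiteTensor β x := by
    intro i n
    induction n with
    | zero => exact ⟨ContinuousLinearMap.id ℝ _, fun φ β => by simp⟩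
    | succ n ih =>
      obtain ⟨P, hP⟩ := ih
      refine ⟨(hermiteOp i).comp P, fun φ β => ?_⟩
      rw [ContinuousLinearMap.comp_apply, integral_hermiteOp_mul_hermiteTensor, hP]
      ring
  suffices H : ∀ s : Finset (Fin d), ∃ P : SchwartzMap (EuclideanSpace ℝ (Fin d)) ℝ →L[ℝ]
        SchwartzMap (EuclideanSpace ℝ (Fin d)) ℝ,
      ∀ φ (β : Fin d → ℕ+), ∫ x, P φ x * hermiteTensor β x =
        (∏ i ∈ s, (2 * ((β i : ℕ) : ℝ) - 1) ^ N i) * ∫ x, φ x * hermiteTensor β x from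
    H Finset.univ
  intro s
  induction s using Finset.induction_on with
  | empty => exact ⟨ContinuousLinearMap.id ℝ _, fun φ β => by simp⟩
  | insert i s hi ih =>
    obtain ⟨P, hP⟩ := ih
    obtain ⟨R, hR⟩ := pow i (N i)
    refine ⟨R.comp P, fun φ β => ?_⟩
    rw [ContinuousLinearMap.comp_apply, hR, hP, Finset.prod_insert hi]
    ring

/-! ### The tensor Hermite functions in `L²` -/

lemma tensorGauss_sq_integrable {d : ℕ} (p : Fin d → ℝ[X]) :
    Integrable fun x => tensorGauss p x ^ 2 := by
  have h : Integrable fun y : Fin d → ℝ => ∏ i, polyGauss (p i) (y i) ^ 2 :=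
    Integrable.fintype_prod (f := fun i t => polyGauss (p i) t ^ 2) fun i => by
      simpa only [sq] using polyGauss_mul_integrable (p i) (p i)
  refine ((PiLp.volume_preserving_ofLp (Fin d)).integrable_comp_of_integrable h).congr
    (Filter.Eventually.of_forall fun x => ?_)
  simp [tensorGauss, Finset.prod_pow]

lemma integral_tensorGauss_sq {d : ℕ} (p : Fin d → ℝ[X]) :
    ∫ x, tensorGauss p x ^ 2 = ∏ i, ∫ t, polyGauss (p i) t ^ 2 := by
  rw [← integral_fintype_prod_volume_eq_prod (fun i t => polyGauss (p i) t ^ 2),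
    ← (PiLp.volume_preserving_ofLp (Fin d)).integral_comp
      (MeasurableEquiv.toLp 2 (Fin d → ℝ)).symm.measurableEmbedding]
  simp [tensorGauss, Finset.prod_pow]

lemma hermiteTensor_memLp {d : ℕ} (β : Fin d → ℕ+) : MemLp (hermiteTensor β) 2 := by
  rw [hermiteTensor_eq, memLp_two_iff_integrable_sq
    (tensorGauss_continuous _).aestronglyMeasurable]
  exact tensorGauss_sq_integrable _

lemma norm_hermiteTensor_toLp_sq {d : ℕ} (β : Fin d → ℕ+) :
    ‖(hermiteTensor_memLp β).toLp‖ ^ 2 = (∫ x, polyGauss (hermitePoly 1) x ^ 2) ^ d := by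
  rw [← real_inner_self_eq_norm_sq, L2.inner_def]
  have : ∀ᵐ x : EuclideanSpace ℝ (Fin d), inner ℝ ((hermiteTensor_memLp β).toLp (hermiteTensor β) x)
      ((hermiteTensor_memLp β).toLp (hermiteTensor β) x) = tensorGauss (fun i => hermitePoly (β i)) x ^ 2 := by
    filter_upwards [(hermiteTensor_memLp β).coeFn_toLp] with x hx
    rw [hx, hermiteTensor_eq]
    simp [sq]
  rw [integral_congr_ae this, integral_tensorGauss_sq]
  simp [integral_hermitePoly_sq]

lemma inner_hermiteTensor {d : ℕ} (β : Fin d → ℕ+)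
    (φ : SchwartzMap (EuclideanSpace ℝ (Fin d)) ℝ) :
    inner ℝ ((hermiteTensor_memLp β).toLp) (φ.toLp 2) = ∫ x, φ x * hermiteTensor β x := by
  rw [L2.inner_def]
  refine integral_congr_ae ?_
  filter_upwards [(hermiteTensor_memLp β).coeFn_toLp, φ.coeFn_toLp 2] with x h1 h2
  rw [h1, h2]
  simp

/-! ### Summability and growth of coefficients -/

/-- A finite partial sum is dominated by the sum over a box, which factors into one-dimensional
sums. -/
lemma summable_pi_prod {ι : Type*} {f : ι → ℝ} (hf0 : ∀ n, 0 ≤ f n) (hf : Summable f) (d : ℕ) :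
    Summable fun β : Fin d → ι => ∏ i, f (β i) := by
  classical
  have h0 : ∀ β : Fin d → ι, 0 ≤ ∏ i, f (β i) := fun β => Finset.prod_nonneg fun i _ => hf0 _
  refine summable_of_sum_le (c := ∏ _i : Fin d, ∑' n, f n) h0 fun u => ?_
  have h1 : ∑ β ∈ u, ∏ i, f (β i) ≤
      ∑ β ∈ Fintype.piFinset fun i => u.image fun β => β i, ∏ i, f (β i) :=
    Finset.sum_le_sum_of_subset_of_nonneg
      (fun β hβ => Fintype.mem_piFinset.2 fun i => Finset.mem_image_of_mem _ hβ)
      fun β _ _ => h0 β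
  refine h1.trans ?_
  rw [← Finset.prod_univ_sum]
  exact Finset.prod_le_prod (fun i _ => Finset.sum_nonneg fun n _ => hf0 n)
    fun i _ => hf.sum_le_tsum _ fun n _ => hf0 n

lemma summable_prod_inv_sq (d : ℕ) :
    Summable fun β : Fin d → ℕ+ => ∏ i, ((((β i : ℕ) : ℝ)) ^ 2)⁻¹ :=
  summable_pi_prod (f := fun n : ℕ+ => (((n : ℕ) : ℝ) ^ 2)⁻¹) (fun n => by positivity)
    ((Real.summable_nat_pow_inv.2 one_lt_two).comp_injective PNat.coe_injective) d

/-- Each term is at most the total sum `S`, so `b_β² ≤ S ∏ β_i^θ_i`; the square root of the product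
is bounded by the product itself because all its factors are at least `1`. -/
lemma exists_coeff_bound {d : ℕ} (b : (Fin d → ℕ+) → ℝ) (θ : Fin d → ℕ)
    (hb : Summable fun β : Fin d → ℕ+ => b β ^ 2 * ∏ i, (((β i : ℕ) : ℝ) ^ (θ i))⁻¹) :
    ∃ K, 0 ≤ K ∧ ∀ β, |b β| ≤ K * ∏ i, ((β i : ℕ) : ℝ) ^ θ i := by
  set S := ∑' β : Fin d → ℕ+, b β ^ 2 * ∏ i, (((β i : ℕ) : ℝ) ^ (θ i))⁻¹ with hS
  have hnn : ∀ β : Fin d → ℕ+, 0 ≤ b β ^ 2 * ∏ i, (((β i : ℕ) : ℝ) ^ (θ i))⁻¹ :=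
    fun β => by positivity
  refine ⟨Real.sqrt S, Real.sqrt_nonneg _, fun β => ?_⟩
  set W := ∏ i, ((β i : ℕ) : ℝ) ^ θ i with hW
  have hW1 : 1 ≤ W := by
    rw [hW]
    have hi : ∀ i, (1 : ℝ) ≤ ((β i : ℕ) : ℝ) ^ θ i := fun i =>
      one_le_pow₀ (by exact_mod_cast (β i).pos)
    simpa using Finset.prod_le_prod (s := Finset.univ) (fun _ _ => zero_le_one) fun i _ => hi i
  have h : b β ^ 2 * W⁻¹ ≤ S := by
    have := hb.le_tsum β fun γ _ => hnn γ
    rwa [Finset.prod_inv_distrib] at this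
  have hS0 : 0 ≤ S := tsum_nonneg hnn
  rw [← div_eq_mul_inv, div_le_iff₀ (by positivity)] at h
  apply abs_le_of_sq_le_sq _ (by positivity)
  rw [mul_pow, Real.sq_sqrt hS0]
  exact h.trans (mul_le_mul_of_nonneg_left (by nlinarith) hS0)

lemma inner_tsum_left {ι H : Type*} [NormedAddCommGroup H] [InnerProductSpace ℝ H]
    [CompleteSpace H] {v : ι → H} (hv : Summable fun i => ‖v i‖) (y : H) :
    inner ℝ (∑' i, v i) y = ∑' i, inner ℝ (v i) y := by
  have h := (innerSL ℝ y).map_tsum hv.of_norm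
  simp only [innerSL_apply_apply] at h
  rw [real_inner_comm, h]
  exact tsum_congr fun i => real_inner_comm _ _

/-! ### The tempered distribution -/

/-- A coefficient family of at most polynomial growth defines a tempered
distribution `T = ∑_β b_β η_β`. -/
theorem hermite_coefficients_define_tempered_distribution (d : ℕ) (hd : 1 ≤ d)
    (b : (Fin d → ℕ+) → ℝ) (θ : Fin d → ℕ)
    (hb : Summable fun β : Fin d → ℕ+ =>
      b β ^ 2 * ∏ i, (((β i : ℕ) : ℝ) ^ (θ i))⁻¹) :
    (∀ φ : SchwartzMap (EuclideanSpace ℝ (Fin d)) ℝ,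
      Summable fun β : Fin d → ℕ+ => |b β * ∫ x, φ x * hermiteTensor β x|) ∧
    ∃ T : SchwartzMap (EuclideanSpace ℝ (Fin d)) ℝ →L[ℝ] ℝ,
      ∀ φ : SchwartzMap (EuclideanSpace ℝ (Fin d)) ℝ,
        T φ = ∑' β : Fin d → ℕ+, b β * ∫ x, φ x * hermiteTensor β x := by
  obtain ⟨P, hP⟩ := exists_hermiteOp_prod (d := d) fun i => θ i + 2
  obtain ⟨K, hK, hbK⟩ := exists_coeff_bound b θ hb
  set l : (Fin d → ℕ+) → ℝ := fun β => ∏ i, (2 * ((β i : ℕ) : ℝ) - 1) ^ (θ i + 2) with hl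
  have hge : ∀ n : ℕ+, ((n : ℕ) : ℝ) ≤ 2 * ((n : ℕ) : ℝ) - 1 ∧ (0 : ℝ) < ((n : ℕ) : ℝ) := by
    intro n
    have : (1 : ℝ) ≤ ((n : ℕ) : ℝ) := by exact_mod_cast n.pos
    constructor <;> linarith
  have hlpos : ∀ β, 0 < l β := fun β =>
    Finset.prod_pos fun i _ => pow_pos ((hge (β i)).2.trans_le (hge (β i)).1) _
  set v : (Fin d → ℕ+) → Lp ℝ 2 (volume : Measure (EuclideanSpace ℝ (Fin d))) :=
    fun β => (b β / l β) • (hermiteTensor_memLp β).toLp with hv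
  set M := Real.sqrt ((∫ x, polyGauss (hermitePoly 1) x ^ 2) ^ d) with hM
  -- The exponent `θ i + 2` in `l` leaves the factors `β_i⁻²` because `2 n - 1 ≥ n`.
  have hcoef : ∀ β, |b β / l β| ≤ K * ∏ i, ((((β i : ℕ) : ℝ)) ^ 2)⁻¹ := by
    intro β
    rw [abs_div, abs_of_pos (hlpos β), div_le_iff₀ (hlpos β)]
    refine (hbK β).trans ?_
    rw [mul_assoc, hl, ← Finset.prod_mul_distrib]
    refine mul_le_mul_of_nonneg_left (Finset.prod_le_prod (fun i _ => by positivity)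
      fun i _ => ?_) hK
    obtain ⟨h1, h2⟩ := hge (β i)
    rw [le_inv_mul_iff₀ (by positivity), mul_comm, ← pow_add]
    exact pow_le_pow_left₀ h2.le h1 _
  have hvs : Summable fun β => ‖v β‖ := by
    refine Summable.of_nonneg_of_le (fun β => norm_nonneg _) (fun β => ?_)
      (((summable_prod_inv_sq d).mul_left K).mul_right M)
    rw [hv, norm_smul, Real.norm_eq_abs]
    refine mul_le_mul (hcoef β) ?_ (norm_nonneg _) ((abs_nonneg _).trans (hcoef β))
    rw [hM, ← norm_hermiteTensor_toLp_sq β, Real.sqrt_sq (norm_nonneg _)]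
  have hterm : ∀ (φ : SchwartzMap (EuclideanSpace ℝ (Fin d)) ℝ) β,
      inner ℝ (v β) ((P φ).toLp 2) = b β * ∫ x, φ x * hermiteTensor β x := by
    intro φ β
    rw [hv, real_inner_smul_left, inner_hermiteTensor, hP, ← mul_assoc,
      div_mul_cancel₀ _ (hlpos β).ne']
  constructor
  · intro φ
    refine Summable.of_nonneg_of_le (fun β => abs_nonneg _) (fun β => ?_)
      (hvs.mul_right ‖(P φ).toLp 2‖)
    rw [← hterm]
    exact abs_real_inner_le_norm _ _
  · refine ⟨(innerSL ℝ (∑' β, v β)).comp ((SchwartzMap.toLpCLM ℝ ℝ 2 volume).comp P),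
      fun φ => ?_⟩
    rw [ContinuousLinearMap.comp_apply, ContinuousLinearMap.comp_apply, innerSL_apply_apply,
      SchwartzMap.toLpCLM_apply, inner_tsum_left hvs]
    exact tsum_congr (hterm φ)
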